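/- arXiv:1707.02887 — 2 statements merged into one kernel-verified Lean document; each statement's English description precedes it below -/
import Mathlib

section
/- For all positive real numbers A, B and z₀, the double integral ∫_{-A}^{A} ∫_{-B}^{B} z₀ / (z₀² + x² + y²)^{3/2} dy dx equals 4·arctan( A·B / ( z₀·√(A² + B² + z₀²) ) ). -/
open MeasureTheory Real

lemma lis_aux_deriv (c t : ℝ) (hc : 0 < c) :
    HasDerivAt (fun t : ℝ => t / Real.sqrt (c + t ^ 2)) (c / Real.sqrt (c + t ^ 2) ^ 3) t := by
  have hp : 0 < c + t ^ 2 := by positivity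
  have hs : 0 < Real.sqrt (c + t ^ 2) := Real.sqrt_pos.mpr hp
  have hsq : Real.sqrt (c + t ^ 2) ^ 2 = c + t ^ 2 := Real.sq_sqrt hp.le
  have h1 : HasDerivAt (fun t : ℝ => c + t ^ 2) (2 * t) t := by
    simpa using (hasDerivAt_pow 2 t).const_add c
  have h2 := (hasDerivAt_id t).div (h1.sqrt hp.ne') hs.ne'
  refine h2.congr_deriv ?_
  simp only [id]
  generalize Real.sqrt (c + t ^ 2) = s at *
  have : c = s ^ 2 - t ^ 2 := by linarith
  subst this
  field_simp

lemma lis_aux_rpow (c : ℝ) (hc : 0 < c) : c ^ ((3 : ℝ) / 2) = Real.sqrt c ^ 3 := by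
  rw [Real.sqrt_eq_rpow, ← Real.rpow_natCast, ← Real.rpow_mul hc.le]
  norm_num

lemma lis_aux_inner (B z x : ℝ) (hz : 0 < z) :
    (∫ y in (-B)..B, z / (z ^ 2 + x ^ 2 + y ^ 2) ^ ((3 : ℝ) / 2)) =
      2 * z * B / ((z ^ 2 + x ^ 2) * Real.sqrt (z ^ 2 + x ^ 2 + B ^ 2)) := by
  have hc : 0 < z ^ 2 + x ^ 2 := by positivity
  have hd : ∀ y ∈ Set.uIcc (-B) B, HasDerivAt
      (fun y : ℝ => z / (z ^ 2 + x ^ 2) * (y / Real.sqrt (z ^ 2 + x ^ 2 + y ^ 2)))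
      (z / (z ^ 2 + x ^ 2 + y ^ 2) ^ ((3 : ℝ) / 2)) y := by
    intro y _
    refine ((lis_aux_deriv _ y hc).const_mul _).congr_deriv ?_
    rw [lis_aux_rpow _ (by positivity)]
    field_simp
  rw [intervalIntegral.integral_eq_sub_of_hasDerivAt hd]
  · rw [neg_sq]
    field_simp
    ring
  · apply Continuous.intervalIntegrable
    refine continuous_const.div ?_ (fun y => by positivity)
    exact Continuous.rpow_const (by fun_prop) (fun y => Or.inr (by norm_num))

/-- For all positive real numbers `A`, `B`, `z₀`, the double integral
`∫_{-A}^{A} ∫_{-B}^{B} z₀ / (z₀² + x² + y²)^{3/2} dy dx` equals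
`4 · arctan(A·B / (z₀·√(A² + B² + z₀²)))`. -/
theorem lis_rectangular_array_gain (A B z₀ : ℝ) (hA : 0 < A) (hB : 0 < B) (hz : 0 < z₀) :
    (∫ x in (-A)..A, ∫ y in (-B)..B, z₀ / (z₀ ^ 2 + x ^ 2 + y ^ 2) ^ ((3 : ℝ) / 2)) =
      4 * Real.arctan (A * B / (z₀ * Real.sqrt (A ^ 2 + B ^ 2 + z₀ ^ 2))) := by
  simp only [lis_aux_inner B z₀ _ hz]
  have hc : 0 < B ^ 2 + z₀ ^ 2 := by positivity
  have hd : ∀ x ∈ Set.uIcc (-A) A, HasDerivAt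
      (fun x : ℝ => 2 * Real.arctan (B / z₀ * (x / Real.sqrt (B ^ 2 + z₀ ^ 2 + x ^ 2))))
      (2 * z₀ * B / ((z₀ ^ 2 + x ^ 2) * Real.sqrt (z₀ ^ 2 + x ^ 2 + B ^ 2))) x := by
    intro x _
    refine ((((lis_aux_deriv _ x hc).const_mul (B / z₀)).arctan).const_mul 2).congr_deriv ?_
    rw [show z₀ ^ 2 + x ^ 2 + B ^ 2 = B ^ 2 + z₀ ^ 2 + x ^ 2 by ring]
    have hp : 0 < B ^ 2 + z₀ ^ 2 + x ^ 2 := by positivity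
    have hs : 0 < Real.sqrt (B ^ 2 + z₀ ^ 2 + x ^ 2) := Real.sqrt_pos.mpr hp
    have hsq : Real.sqrt (B ^ 2 + z₀ ^ 2 + x ^ 2) ^ 2 = B ^ 2 + z₀ ^ 2 + x ^ 2 :=
      Real.sq_sqrt hp.le
    generalize Real.sqrt (B ^ 2 + z₀ ^ 2 + x ^ 2) = s at *
    have hk : 1 + (B / z₀ * (x / s)) ^ 2 =
        (z₀ ^ 2 + x ^ 2) * (B ^ 2 + z₀ ^ 2) / (z₀ ^ 2 * s ^ 2) := by
      field_simp
      rw [hsq]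
      ring
    have hzx : 0 < z₀ ^ 2 + x ^ 2 := by positivity
    rw [hk]
    field_simp
  rw [intervalIntegral.integral_eq_sub_of_hasDerivAt hd]
  · rw [neg_sq, neg_div, mul_neg, Real.arctan_neg,
      show B ^ 2 + z₀ ^ 2 + A ^ 2 = A ^ 2 + B ^ 2 + z₀ ^ 2 by ring,
      show B / z₀ * (A / Real.sqrt (A ^ 2 + B ^ 2 + z₀ ^ 2)) =
        A * B / (z₀ * Real.sqrt (A ^ 2 + B ^ 2 + z₀ ^ 2)) by
          rw [div_mul_div_comm, mul_comm B A]]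
    ring
  · apply Continuous.intervalIntegrable
    refine continuous_const.div (by fun_prop) (fun y => by positivity)
end

section
/- Let θ > 0, β = ⌊1/θ⌋ and α = 1/θ − β, and let sinc denote the normalized sinc function, sinc(x) = sin(πx)/(πx) for x ≠ 0 and sinc(0) = 1. Then Σ_{ℓ∈ℤ} sinc(ℓ/θ)² = θ²·(β² + 2αβ + α). In particular, the interference power with matched filtering, I = ζP·Σ_{ℓ≠0} sinc(ℓ/θ)², equals ζP·(θ²(β² + 2αβ + α) − 1), and I = 0 whenever 1/θ is an integer. -/
open MeasureTheory Real

lemma aux_sum (a : ℝ) (ha : a ∈ Set.Icc (0:ℝ) 1) :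
    HasSum (fun n : ℕ => Real.sin (π * n * a) ^ 2 / (n : ℝ) ^ 2) (π ^ 2 / 2 * (a - a ^ 2)) := by
  have h1 := hasSum_one_div_nat_pow_mul_cos one_ne_zero ha
  have h2 := (hasSum_zeta_two.sub h1).mul_left (1 / 2)
  have hB : (Polynomial.map (algebraMap ℚ ℝ) (Polynomial.bernoulli 2)).eval a
      = a ^ 2 - a + 1 / 6 := by
    simp [Polynomial.bernoulli, Finset.sum_range_succ, bernoulli_eq_bernoulli'_of_ne_one,
      bernoulli_one]
    ring
  convert! h2 using 1
  · ext n
    have : Real.cos (2 * π * n * a) = 1 - 2 * Real.sin (π * n * a) ^ 2 := by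
      rw [show 2 * π * n * a = 2 * (π * n * a) by ring, Real.cos_two_mul, Real.cos_sq']
      ring
    rw [this]
    ring
  · rw [show 2 * 1 = 2 from rfl, hB]
    norm_num [Nat.factorial]
    ring

lemma aux_int (a : ℝ) (ha : a ∈ Set.Icc (0:ℝ) 1) :
    HasSum (fun n : ℤ => Real.sin (π * n * a) ^ 2 / (n : ℝ) ^ 2) (π ^ 2 * (a - a ^ 2)) := by
  have h := aux_sum a ha
  have := HasSum.of_nat_of_neg (f := fun n : ℤ => Real.sin (π * n * a) ^ 2 / (n : ℝ) ^ 2)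
    (by simpa using h) (by simpa using h)
  convert! this using 1
  simp
  ring

/-- Property 4: with `θ > 0`, `β = ⌊1/θ⌋`, `α = 1/θ − β` and the normalized sinc function,
`Σ_{ℓ∈ℤ} sinc(ℓ/θ)² = θ²·(β² + 2αβ + α)`.  In particular the matched-filter interference
power `I = ζP·Σ_{ℓ≠0} sinc(ℓ/θ)²` equals `ζP·(θ²(β² + 2αβ + α) − 1)`, and `I = 0`
whenever `1/θ` is an integer. -/
theorem sinc_squared_sum_interference (θ : ℝ) (hθ : 0 < θ) (β : ℤ) (hβ : β = ⌊1 / θ⌋)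
    (α : ℝ) (hα : α = 1 / θ - β) (sinc : ℝ → ℝ) (hsinc0 : sinc 0 = 1)
    (hsinc : ∀ x : ℝ, x ≠ 0 → sinc x = Real.sin (π * x) / (π * x)) :
    (∑' ℓ : ℤ, (sinc ((ℓ : ℝ) / θ)) ^ 2) = θ ^ 2 * ((β : ℝ) ^ 2 + 2 * α * β + α) ∧
    ∀ ζ P : ℝ, 0 < ζ → 0 < P →
      ζ * P * (∑' ℓ : {ℓ : ℤ // ℓ ≠ 0}, (sinc (((ℓ : ℤ) : ℝ) / θ)) ^ 2) =
        ζ * P * (θ ^ 2 * ((β : ℝ) ^ 2 + 2 * α * β + α) - 1) ∧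
      ((∃ n : ℤ, 1 / θ = (n : ℝ)) →
        ζ * P * (∑' ℓ : {ℓ : ℤ // ℓ ≠ 0}, (sinc (((ℓ : ℤ) : ℝ) / θ)) ^ 2) = 0) := by
  have hθ' := hθ.ne'
  have hinv : 1 / θ = α + β := by rw [hα]; ring
  have ha : α ∈ Set.Icc (0:ℝ) 1 := by
    have h1 := Int.floor_le (1 / θ)
    have h2 := Int.lt_floor_add_one (1 / θ)
    rw [← hβ] at h1 h2
    constructor <;> linarith
  have hsq : θ ^ 2 * (α + β) ^ 2 = 1 := by
    rw [← hinv]; field_simp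
  have hg := (aux_int α ha).mul_left (θ ^ 2 / π ^ 2)
  have hfg : ∀ n : ℤ, n ≠ 0 → sinc ((n : ℝ) / θ) ^ 2 =
      θ ^ 2 / π ^ 2 * (Real.sin (π * n * α) ^ 2 / (n : ℝ) ^ 2) := by
    intro n hn
    have hn' : (n : ℝ) ≠ 0 := by exact_mod_cast hn
    rw [hsinc _ (div_ne_zero hn' hθ')]
    have e : π * ((n : ℝ) / θ) = π * n * α + (n * β : ℤ) * π := by
      rw [show (n : ℝ) / θ = n * (1 / θ) by ring, hinv]
      push_cast
      ring
    have hs : Real.sin (π * ((n : ℝ) / θ)) ^ 2 = Real.sin (π * n * α) ^ 2 := by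
      rw [e, Real.sin_add_int_mul_pi, mul_pow, ← sq_abs ((-1 : ℝ) ^ (n * β))]
      simp
    rw [div_pow, hs]
    field_simp
  have hval : θ ^ 2 / π ^ 2 * (π ^ 2 * (α - α ^ 2)) =
      θ ^ 2 * ((β : ℝ) ^ 2 + 2 * α * β + α) - 1 := by
    have hp := Real.pi_ne_zero
    rw [← hsq]
    field_simp
    ring
  rw [hval] at hg
  have hsub : (∑' ℓ : {ℓ : ℤ // ℓ ≠ 0}, (sinc (((ℓ : ℤ) : ℝ) / θ)) ^ 2) =
      θ ^ 2 * ((β : ℝ) ^ 2 + 2 * α * β + α) - 1 := by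
    rw [← hg.tsum_eq]
    rw [← tsum_subtype_eq_of_support_subset (s := {ℓ : ℤ | ℓ ≠ 0})]
    · exact tsum_congr fun l => hfg l.1 l.2
    · intro n hn h0
      subst h0
      simp at hn
  refine ⟨?_, fun ζ P _ _ => ⟨by rw [hsub], ?_⟩⟩
  · have h := hg.add (hasSum_ite_eq (0 : ℤ) (1 : ℝ))
    rw [sub_add_cancel] at h
    rw [← h.tsum_eq]
    refine tsum_congr fun n => ?_
    by_cases hn : n = 0
    · subst hn; simp [hsinc0]
    · rw [hfg n hn]; simp [hn]
  · rintro ⟨n, hn⟩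
    have hb : β = n := by rw [hβ, hn, Int.floor_intCast]
    have ha0 : α = 0 := by rw [hα, hn, hb, sub_self]
    rw [hsub]
    rw [ha0] at hsq ⊢
    have : θ ^ 2 * ((β : ℝ) ^ 2 + 2 * 0 * β + 0) - 1 = 0 := by linarith
    rw [this, mul_zero]
end
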